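/- An R-linear map D : B → B lies in Diff^k(B) if and only if the R-linear map φ_D : B ⊗_R B → B, φ_D(a ⊗ c) = D(a)c, vanishes identically on the left ideal μ_k of B^e; in particular, for D ∈ Diff^k(B) the map φ_D descends to a well-defined R-linear map J^k(B) = B^e/μ_k → B. -/

import Mathlib

open TensorProduct MulOpposite

/-- The universal differential `da = 1 ⊗ aᵒᵖ - a ⊗ 1` in `Bᵉ = B ⊗[R] Bᵐᵒᵖ`. -/
noncomputable def duniv (R : Type*) {B : Type*} [CommRing R] [Ring B] [Algebra R B] (a : B) :
    B ⊗[R] Bᵐᵒᵖ :=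
  (1 : B) ⊗ₜ[R] op a - a ⊗ₜ[R] (1 : Bᵐᵒᵖ)

/-- `δ_b(D)(a) = D(a) * b - D(a * b)`. -/
noncomputable def deltaOp (R : Type*) {B : Type*} [CommRing R] [Ring B] [Algebra R B] (b : B)
    (D : B →ₗ[R] B) : B →ₗ[R] B :=
  LinearMap.mulRight R b ∘ₗ D - D ∘ₗ LinearMap.mulRight R b

/-- `φ_D : B ⊗[R] Bᵐᵒᵖ →ₗ[R] B`, `φ_D (a ⊗ cᵒᵖ) = D a * c`. -/
noncomputable def phiD (R : Type*) {B : Type*} [CommRing R] [Ring B] [Algebra R B]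
    (D : B →ₗ[R] B) : B ⊗[R] Bᵐᵒᵖ →ₗ[R] B :=
  TensorProduct.lift (((LinearMap.mul R B).comp D).compl₂
    ((opLinearEquiv R : B ≃ₗ[R] Bᵐᵒᵖ).symm.toLinearMap))

/-- The left ideal (here: `R`-submodule) `μ_k` of `Bᵉ`, spanned by all products
`(a ⊗ bᵒᵖ) · da₀ ⋯ da_k`. -/
noncomputable def muk (R : Type*) (B : Type*) [CommRing R] [Ring B] [Algebra R B] (k : ℕ) :
    Submodule R (B ⊗[R] Bᵐᵒᵖ) :=
  Submodule.span R
    {z | ∃ (a b : B) (f : Fin (k + 1) → B),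
      z = (a ⊗ₜ[R] op b) * (List.ofFn fun i => duniv R (f i)).prod}

/-- `D` is a differential operator of order `k`. -/
def IsDiffk (R : Type*) {B : Type*} [CommRing R] [Ring B] [Algebra R B] (k : ℕ)
    (D : B →ₗ[R] B) : Prop :=
  ∀ f : Fin (k + 1) → B, (List.ofFn f).foldr (deltaOp R) D = 0

theorem phiD_tmul {R B : Type*} [CommRing R] [Ring B] [Algebra R B] (D : B →ₗ[R] B) (a : B)
    (c : Bᵐᵒᵖ) : phiD R D (a ⊗ₜ[R] c) = D a * unop c := by
  simp [phiD]

/-- Right multiplication by `db` on `Bᵉ` corresponds to applying `δ_b` to `D`. -/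
theorem phiD_mul_duniv {R B : Type*} [CommRing R] [Ring B] [Algebra R B] (D : B →ₗ[R] B) (b : B)
    (z : B ⊗[R] Bᵐᵒᵖ) : phiD R D (z * duniv R b) = phiD R (deltaOp R b D) z := by
  induction z with
  | zero => simp
  | tmul a c =>
    simp [duniv, deltaOp, mul_sub, Algebra.TensorProduct.tmul_mul_tmul, phiD_tmul, sub_mul,
      mul_assoc]
  | add x y hx hy => simp only [add_mul, map_add, hx, hy]

theorem phiD_mul_prod_duniv {R B : Type*} [CommRing R] [Ring B] [Algebra R B] (D : B →ₗ[R] B)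
    (l : List B) (z : B ⊗[R] Bᵐᵒᵖ) :
    phiD R D (z * (l.map (duniv R)).prod) = phiD R (l.foldr (deltaOp R) D) z := by
  induction l generalizing z with
  | nil => simp
  | cons b l ih =>
    rw [List.map_cons, List.prod_cons, ← mul_assoc, ih, phiD_mul_duniv, List.foldr_cons]

theorem isDiffk_iff_phiD_eq_zero {R B : Type*} [CommRing R] [Ring B] [Algebra R B] (k : ℕ)
    (D : B →ₗ[R] B) : IsDiffk R k D ↔ ∀ z ∈ muk R B k, phiD R D z = 0 := by
  have key (f : Fin (k + 1) → B) (a b : B) :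
      phiD R D ((a ⊗ₜ[R] op b) * (List.ofFn fun i => duniv R (f i)).prod) =
        (List.ofFn f).foldr (deltaOp R) D a * b := by
    rw [← unop_op b, ← phiD_tmul, ← phiD_mul_prod_duniv, List.map_ofFn, unop_op]
    rfl
  constructor
  · intro h z hz
    refine (Submodule.span_le (p := LinearMap.ker (phiD R D))).2 ?_ hz
    rintro _ ⟨a, b, f, rfl⟩
    rw [SetLike.mem_coe, LinearMap.mem_ker, key, h f, LinearMap.zero_apply, zero_mul]
  · intro h f
    ext a
    rw [← mul_one ((List.ofFn f).foldr (deltaOp R) D a), ← key, LinearMap.zero_apply]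
    exact h _ (Submodule.subset_span ⟨a, 1, f, rfl⟩)

theorem stmt2 {R B : Type*} [CommRing R] [Ring B] [Algebra R B] (k : ℕ) (D : B →ₗ[R] B) :
    (IsDiffk R k D ↔ ∀ z ∈ muk R B k, phiD R D z = 0) ∧
    (IsDiffk R k D →
      ∃ g : ((B ⊗[R] Bᵐᵒᵖ) ⧸ muk R B k) →ₗ[R] B, g ∘ₗ (muk R B k).mkQ = phiD R D) := by
  refine ⟨isDiffk_iff_phiD_eq_zero k D, fun h => ?_⟩
  exact ⟨(muk R B k).liftQ (phiD R D) fun z hz => (isDiffk_iff_phiD_eq_zero k D).1 h z hz,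
    Submodule.liftQ_mkQ _ _ _⟩
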